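/- Let n ≥ 1, q ≥ n+1, b : ℕ × ℕ → ℂ, N ∈ ℂ with N ≠ 0, and G = (x_G, y_G) ∈ ℝ². For l ∈ {1, …, 2n+1} set θ_l = 2π(l−1)/(2n+1), let φ_l be the generalized plane wave with data (G, N, θ_l, q, b), and let e_l(x,y) = exp(N((x−x_G)cos θ_l + (y−y_G)sin θ_l)). Let M_n and M_n^C be the ((n+1)(n+2)/2) × (2n+1) matrices with rows indexed by (k₁,k₂), k₁+k₂ ≤ n, ordered by increasing total order k₁+k₂ (and by increasing k₂ within equal total order), with entries (M_n)_{(k₁,k₂),l} = ∂_x^{k₁}∂_y^{k₂}φ_l(G)/(k₁!k₂!) and (M_n^C)_{(k₁,k₂),l} = ∂_x^{k₁}∂_y^{k₂}e_l(G)/(k₁!k₂!). Then there exists a lower-triangular square matrix L_n (with respect to this row ordering) with all diagonal coefficients equal to 1, whose entries depend only on N, q and b (not on l), such that M_n = L_n · M_n^C; consequently rank M_n = rank M_n^C = 2n+1. -/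

import Mathlib

noncomputable section

/-- Partial derivative of a function `ℝ² → ℂ` with respect to the first variable. -/
def pdx (f : ℝ × ℝ → ℂ) : ℝ × ℝ → ℂ := fun p => fderiv ℝ f p (1, 0)

/-- Partial derivative of a function `ℝ² → ℂ` with respect to the second variable. -/
def pdy (f : ℝ × ℝ → ℂ) : ℝ × ℝ → ℂ := fun p => fderiv ℝ f p (0, 1)

/-- The GPW system: the nonlinear system on the coefficients `lam` arising from matching the
Taylor expansion of `β - P_Δ` at `G` up to order `q`, where `b (i,j) = ∂ₓ^i ∂_y^j β(G)/(i!j!)`. -/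
def gpwSystem (q : ℕ) (b lam : ℕ × ℕ → ℂ) : Prop :=
  ∀ i j : ℕ, i + j + 1 ≤ q →
    b (i, j) =
      (((i + 2) * (i + 1) : ℕ) : ℂ) * lam (i + 2, j)
        + (((j + 2) * (j + 1) : ℕ) : ℂ) * lam (i, j + 2)
        + ∑ k ∈ Finset.range (i + 1), ∑ l ∈ Finset.range (j + 1),
            (((i - k + 1) * (k + 1) : ℕ) : ℂ) * lam (i - k + 1, j - l) * lam (k + 1, l)
        + ∑ k ∈ Finset.range (j + 1), ∑ l ∈ Finset.range (i + 1),
            (((j - k + 1) * (k + 1) : ℕ) : ℂ) * lam (i - l, j - k + 1) * lam (l, k + 1)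

/-- The GPW normalization: `lam (0,0) = 0`, `(lam (1,0), lam (0,1)) = N (cos θ, sin θ)`, and
`lam (i,j) = 0` for `i ∈ {0,1}` and `1 < i + j ≤ q + 1`. -/
def gpwNormalized (q : ℕ) (N : ℂ) (θ : ℝ) (lam : ℕ × ℕ → ℂ) : Prop :=
  lam (0, 0) = 0 ∧ lam (1, 0) = N * Real.cos θ ∧ lam (0, 1) = N * Real.sin θ ∧
    ∀ i j : ℕ, i ≤ 1 → 1 < i + j → i + j ≤ q + 1 → lam (i, j) = 0

/-- The polynomial `P(x,y) = Σ_{0 ≤ i+j ≤ q+1} lam (i,j) (x-x_G)^i (y-y_G)^j`, so that the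
generalized plane wave is `φ = exp P`. -/
def gpwP (q : ℕ) (G : ℝ × ℝ) (lam : ℕ × ℕ → ℂ) (z : ℝ × ℝ) : ℂ :=
  ∑ i ∈ Finset.range (q + 2), ∑ j ∈ Finset.range (q + 2 - i),
    lam (i, j) * ((z.1 - G.1 : ℝ) : ℂ) ^ i * ((z.2 - G.2 : ℝ) : ℂ) ^ j

/-- Row index type: pairs `(k₁, k₂)` of nonnegative integers with `k₁ + k₂ ≤ n`, ordered by
increasing total order `k₁ + k₂` and, within the same total order, by increasing `k₂`. -/
def RowIdx (n : ℕ) := { p : Fin (n + 1) × Fin (n + 1) // (p.1 : ℕ) + (p.2 : ℕ) ≤ n }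

instance (n : ℕ) : Fintype (RowIdx n) := by unfold RowIdx; infer_instance

instance (n : ℕ) : DecidableEq (RowIdx n) := by unfold RowIdx; infer_instance

/-- `r` comes strictly before `r'` in the row ordering (by increasing total order, then by
increasing second index). -/
def RowIdx.lt {n : ℕ} (r r' : RowIdx n) : Prop :=
  (r.1.1 : ℕ) + (r.1.2 : ℕ) < (r'.1.1 : ℕ) + (r'.1.2 : ℕ) ∨
    ((r.1.1 : ℕ) + (r.1.2 : ℕ) = (r'.1.1 : ℕ) + (r'.1.2 : ℕ) ∧ (r.1.2 : ℕ) < (r'.1.2 : ℕ))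

/-!
Write `c = N cos θ` and `s = N sin θ`. Solving the GPW system order by order expresses `λ(i, j)`,
for `i + j ≥ 2`, as a polynomial in `c` and `s` with coefficients independent of `θ`; since
`c ^ 2 + s ^ 2 = N ^ 2` is a constant, its degree is at most `i + j - 2`. Give `c` and `s` weight
`1` and the variables `x - x_G` and `y - y_G` weight `-1`: a partial derivative raises weights by
at most `1`, and `P` differs from the phase of the plane wave by terms of weight at most `-2`. Hence
`∂_x^k₁ ∂_y^k₂ φ(G)` is `c ^ k₁ * s ^ k₂`, the derivative of the plane wave, plus a polynomial in
`c` and `s` of degree at most `k₁ + k₂ - 2`, that is, a combination of earlier rows of `M_n^C`,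
which is the same for all `θ`. For the rank, polynomials of degree at most `n` in `c` and `s`
include the Fourier modes `e^{imθ}` with `|m| ≤ n`, so a vector in the kernel of `M_n^C` is, up to
rescaling its entries, in the kernel of a Vandermonde matrix with nodes `e^{iθ_l}`.
-/

section LinearAlgebra

lemma det_eq_one_of_blockUnitriangular {m R α : Type*} [Fintype m] [DecidableEq m] [CommRing R]
    [LinearOrder α] {L : Matrix m m R} {f : m → α}
    (hL : ∀ i j, f i ≤ f j → L i j = (1 : Matrix m m R) i j) : L.det = 1 := by
  have hT : L.BlockTriangular (OrderDual.toDual ∘ f) := by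
    intro i j (hij : f i < f j)
    rw [hL i j hij.le, Matrix.one_apply_ne (ne_of_apply_ne f hij.ne)]
  rw [hT.det]
  refine Finset.prod_eq_one fun a _ => ?_
  suffices L.toSquareBlock (OrderDual.toDual ∘ f) a = 1 by rw [this, Matrix.det_one]
  ext ⟨i, hi⟩ ⟨j, hj⟩
  have hij : f i = f j := OrderDual.toDual.injective (hi.trans hj.symm)
  simp [Matrix.toSquareBlock_def, hL i j hij.le, Matrix.one_apply]

lemma exists_blockUnitriangular_mul_eq {m ι R α : Type*} [Fintype m] [DecidableEq m] [Ring R]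
    [LinearOrder α] {f : m → α} {U V : Matrix m ι R}
    (h : ∀ i, V.row i - U.row i ∈ Submodule.span R (U.row '' {j | f j < f i})) :
    ∃ L : Matrix m m R, (∀ i j, f i ≤ f j → L i j = (1 : Matrix m m R) i j) ∧ V = L * U := by
  simp only [Finsupp.mem_span_image_iff_linearCombination, Finsupp.mem_supported'] at h
  choose w hw hwU using h
  refine ⟨1 + Matrix.of fun i => w i, fun i j hij => ?_, ?_⟩
  · simp [hw i j (not_lt.mpr hij)]
  · ext i l
    have hil := congrFun (hwU i) l
    rw [Finsupp.linearCombination_apply, Finsupp.sum_fintype _ _ (by simp), Finset.sum_apply,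
      Pi.sub_apply] at hil
    rw [Matrix.add_mul, Matrix.one_mul, Matrix.add_apply, Matrix.mul_apply]
    exact (add_eq_of_eq_sub' hil).symm

lemma eq_zero_of_forall_sum_mul_pow_eq_zero {ι R : Type*} [Fintype ι] [CommRing R] [IsDomain R]
    {x v : ι → R} (hx : Function.Injective x)
    (h : ∀ p < Fintype.card ι, ∑ i, v i * x i ^ p = 0) : v = 0 := by
  let e := Fintype.equivFin ι
  have hv : v ∘ e.symm = 0 :=
    Matrix.eq_zero_of_forall_pow_sum_mul_pow_eq_zero (hx.comp e.symm.injective) fun p =>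
      (e.symm.sum_comp fun i => v i * x i ^ (p : ℕ)).trans (h p p.2)
  funext i
  simpa using congrFun hv (e i)

end LinearAlgebra

section PolyLE

/-- The elements `p(c, s)` of `A`, for `p` a polynomial in two variables over `R` of total degree
at most `d`. The bound is an integer so that weights can be subtracted from it; the submodule is
`⊥` when `d < 0`. -/
def polyLE (R : Type*) {A : Type*} [CommSemiring R] [CommSemiring A] [Algebra R A] (c s : A)
    (d : ℤ) : Submodule R A :=
  Submodule.span R {u | ∃ a b : ℕ, (a + b : ℤ) ≤ d ∧ u = c ^ a * s ^ b}

variable {R A : Type*} [CommSemiring R] [CommSemiring A] [Algebra R A] {c s : A} {d e : ℤ}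

lemma pow_mul_pow_mem_polyLE {a b : ℕ} (h : (a + b : ℤ) ≤ d) : c ^ a * s ^ b ∈ polyLE R c s d :=
  Submodule.subset_span ⟨a, b, h, rfl⟩

lemma polyLE_mono (h : d ≤ e) : polyLE R c s d ≤ polyLE R c s e :=
  Submodule.span_mono fun _ ⟨a, b, hab, hu⟩ => ⟨a, b, hab.trans h, hu⟩

lemma mul_mem_polyLE {u v : A} (hu : u ∈ polyLE R c s d) (hv : v ∈ polyLE R c s e) :
    u * v ∈ polyLE R c s (d + e) := by
  have huv := Submodule.mul_mem_mul hu hv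
  rw [polyLE, polyLE, Submodule.span_mul_span] at huv
  refine Submodule.span_mono ?_ huv
  rintro _ ⟨_, ⟨a, b, hab, rfl⟩, _, ⟨a', b', hab', rfl⟩, rfl⟩
  exact ⟨a + a', b + b', by push_cast; linarith, by ring⟩

lemma algebraMap_mem_polyLE (hd : 0 ≤ d) (r : R) : algebraMap R A r ∈ polyLE R c s d := by
  rw [Algebra.algebraMap_eq_smul_one]
  refine Submodule.smul_mem _ r ?_
  simpa using
    pow_mul_pow_mem_polyLE (R := R) (c := c) (s := s) (a := 0) (b := 0) (by simpa using hd)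

lemma fst_mem_polyLE (hd : 1 ≤ d) : c ∈ polyLE R c s d := by
  simpa using
    pow_mul_pow_mem_polyLE (R := R) (c := c) (s := s) (a := 1) (b := 0) (by simpa using hd)

lemma snd_mem_polyLE (hd : 1 ≤ d) : s ∈ polyLE R c s d := by
  simpa using
    pow_mul_pow_mem_polyLE (R := R) (c := c) (s := s) (a := 0) (b := 1) (by simpa using hd)

lemma pow_mem_polyLE {u : A} (hu : u ∈ polyLE R c s 1) (k : ℕ) : u ^ k ∈ polyLE R c s k := by
  induction k with
  | zero => simpa using algebraMap_mem_polyLE (c := c) (s := s) le_rfl (1 : R)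
  | succ k ih => simpa [pow_succ] using mul_mem_polyLE ih hu

end PolyLE

section Coefficients

/-- The coefficient of `x ^ i * y ^ j` in `P_x ^ 2 + P_y ^ 2`, where `P` is the power series with
coefficients `Λ`: the nonlinear part of the GPW system. -/
def gpwQuad {A : Type*} [CommSemiring A] (Λ : ℕ × ℕ → A) (i j : ℕ) : A :=
  ∑ k ∈ Finset.range (i + 1), ∑ l ∈ Finset.range (j + 1),
      (((i - k + 1) * (k + 1) : ℕ) : A) * Λ (i - k + 1, j - l) * Λ (k + 1, l)
    + ∑ k ∈ Finset.range (j + 1), ∑ l ∈ Finset.range (i + 1),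
      (((j - k + 1) * (k + 1) : ℕ) : A) * Λ (i - l, j - k + 1) * Λ (l, k + 1)

variable {R A : Type*} [CommSemiring R] [CommSemiring A] [Algebra R A] {Λ : ℕ × ℕ → A}

lemma mul_coeff_mem_polyLE {m : ℕ} (hm : 3 ≤ m)
    (hΛ : ∀ i j : ℕ, 2 ≤ i + j → i + j < m →
      Λ (i, j) ∈ polyLE R (Λ (1, 0)) (Λ (0, 1)) ((i : ℤ) + j - 2))
    {i j i' j' : ℕ} (hsum : i + j + i' + j' = m) (hij : 1 ≤ i + j) (hij' : 1 ≤ i' + j') :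
    Λ (i, j) * Λ (i', j') ∈ polyLE R (Λ (1, 0)) (Λ (0, 1)) ((m : ℤ) - 2) := by
  have order_one : ∀ i j : ℕ, i + j = 1 → Λ (i, j) ∈ polyLE R (Λ (1, 0)) (Λ (0, 1)) 1 := by
    intro i j h
    obtain ⟨rfl, rfl⟩ | ⟨rfl, rfl⟩ := Nat.add_eq_one_iff.mp h
    · exact snd_mem_polyLE le_rfl
    · exact fst_mem_polyLE le_rfl
  rcases hij.eq_or_lt with h | h
  · exact polyLE_mono (by omega)
      (mul_mem_polyLE (order_one i j h.symm) (hΛ i' j' (by omega) (by omega)))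
  rcases hij'.eq_or_lt with h' | h'
  · exact polyLE_mono (by omega)
      (mul_mem_polyLE (hΛ i j (by omega) (by omega)) (order_one i' j' h'.symm))
  · exact polyLE_mono (by omega)
      (mul_mem_polyLE (hΛ i j (by omega) (by omega)) (hΛ i' j' (by omega) (by omega)))

-- For `i = j = 0` both factors have degree one, and only `c ^ 2 + s ^ 2 = κ` saves the bound.
lemma gpwQuad_mem_polyLE {κ : R} (hκ : Λ (1, 0) ^ 2 + Λ (0, 1) ^ 2 = algebraMap R A κ) {i j : ℕ}
    (hΛ : ∀ i' j' : ℕ, 2 ≤ i' + j' → i' + j' < i + j + 2 →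
      Λ (i', j') ∈ polyLE R (Λ (1, 0)) (Λ (0, 1)) ((i' : ℤ) + j' - 2)) :
    gpwQuad Λ i j ∈ polyLE R (Λ (1, 0)) (Λ (0, 1)) ((i : ℤ) + j) := by
  rcases Nat.eq_zero_or_pos (i + j) with h0 | hpos
  · obtain ⟨rfl, rfl⟩ : i = 0 ∧ j = 0 := by omega
    have hquad : gpwQuad Λ 0 0 = algebraMap R A κ := by
      rw [← hκ]
      simp [gpwQuad, pow_two]
    exact hquad ▸ algebraMap_mem_polyLE (by simp) κ
  have term_mem : ∀ (t : ℕ) {i₁ j₁ i₂ j₂ : ℕ}, i₁ + j₁ + i₂ + j₂ = i + j + 2 → 1 ≤ i₁ + j₁ →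
      1 ≤ i₂ + j₂ →
      (t : A) * Λ (i₁, j₁) * Λ (i₂, j₂) ∈ polyLE R (Λ (1, 0)) (Λ (0, 1)) ((i : ℤ) + j) := by
    intro t i₁ j₁ i₂ j₂ hsum h₁ h₂
    rw [mul_assoc, ← nsmul_eq_mul]
    exact nsmul_mem (polyLE_mono (by omega) (mul_coeff_mem_polyLE (by omega) hΛ hsum h₁ h₂)) t
  refine add_mem ?_ ?_ <;>
  · refine sum_mem fun k hk => sum_mem fun l hl => ?_
    rw [Finset.mem_range] at hk hl
    exact term_mem _ (by omega) (by omega) (by omega)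

lemma coeff_mem_polyLE {K A : Type*} [Field K] [CharZero K] [CommRing A] [Algebra K A]
    {Λ : ℕ × ℕ → A} {q : ℕ} {b : ℕ × ℕ → K} {κ : K}
    (hsys : ∀ i j : ℕ, i + j + 1 ≤ q → algebraMap K A (b (i, j)) =
      (((i + 2) * (i + 1) : ℕ) : A) * Λ (i + 2, j) + (((j + 2) * (j + 1) : ℕ) : A) * Λ (i, j + 2)
        + gpwQuad Λ i j)
    (hzero : ∀ i j : ℕ, i ≤ 1 → 1 < i + j → i + j ≤ q + 1 → Λ (i, j) = 0)
    (hκ : Λ (1, 0) ^ 2 + Λ (0, 1) ^ 2 = algebraMap K A κ) (i j : ℕ) (hij : 2 ≤ i + j)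
    (hq : i + j ≤ q + 1) :
    Λ (i, j) ∈ polyLE K (Λ (1, 0)) (Λ (0, 1)) ((i : ℤ) + j - 2) := by
  induction hm : i + j using Nat.strong_induction_on generalizing i j with
  | _ m ih_order =>
  induction i using Nat.strong_induction_on generalizing j with
  | _ i ih_fst =>
  by_cases hi : i ≤ 1
  · exact hzero i j hi (by omega) hq ▸ zero_mem _
  obtain ⟨i, rfl⟩ := Nat.exists_eq_add_of_le' (not_le.mp hi)
  have hprev := ih_fst i (by omega) (j + 2) (by omega) (by omega) (by omega)
  have hquad := gpwQuad_mem_polyLE hκ (i := i) (j := j) fun i' j' h h' =>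
    ih_order _ (by omega) i' j' h (by omega) rfl
  have hsolve : Λ (i + 2, j) = (((i + 2) * (i + 1) : ℕ) : K)⁻¹ •
      (algebraMap K A (b (i, j)) - ((j + 2) * (j + 1)) • Λ (i, j + 2) - gpwQuad Λ i j) := by
    rw [eq_inv_smul_iff₀ (Nat.cast_ne_zero.mpr (by positivity)), hsys i j (by omega),
      Nat.cast_smul_eq_nsmul, nsmul_eq_mul, nsmul_eq_mul]
    ring
  rw [hsolve]
  refine Submodule.smul_mem _ _ (sub_mem (sub_mem ?_ (nsmul_mem ?_ _)) ?_)
  · exact algebraMap_mem_polyLE (by omega) _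
  · exact polyLE_mono (by omega) hprev
  · exact polyLE_mono (by omega) hquad

end Coefficients

section Weight

variable {ι : Type*} {G : ι → ℝ × ℝ} {c s : ι → ℂ} {d e : ℤ}

/-- The family of monomials `u * (x - x_G) ^ i * (y - y_G) ^ j`, where the coefficient `u` and the
base point `G` depend on the member of the family. -/
def monomialFamily (G : ι → ℝ × ℝ) (u : ι → ℂ) (i j : ℕ) : ι → ℝ × ℝ → ℂ := fun l z =>
  u l * ((z.1 - (G l).1 : ℝ) : ℂ) ^ i * ((z.2 - (G l).2 : ℝ) : ℂ) ^ j

/-- The families of polynomials in `x - x_G` and `y - y_G` of weight at most `d`, where `c` and `s`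
have weight `1` and the two variables have weight `-1`. A partial derivative raises the weight by
at most `1`. -/
def weightLE (G : ι → ℝ × ℝ) (c s : ι → ℂ) (d : ℤ) : Submodule ℂ (ι → ℝ × ℝ → ℂ) :=
  Submodule.span ℂ
    {F | ∃ (i j : ℕ) (u : ι → ℂ), u ∈ polyLE ℂ c s (d + i + j) ∧ F = monomialFamily G u i j}

lemma monomialFamily_mem_weightLE {u : ι → ℂ} {i j : ℕ} (hu : u ∈ polyLE ℂ c s (d + i + j)) :
    monomialFamily G u i j ∈ weightLE G c s d :=
  Submodule.subset_span ⟨i, j, u, hu, rfl⟩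

lemma const_mem_weightLE {u : ι → ℂ} (hu : u ∈ polyLE ℂ c s d) :
    (fun l _ => u l) ∈ weightLE G c s d := by
  have hmon : monomialFamily G u 0 0 = fun l _ => u l := by
    funext l z
    simp [monomialFamily]
  exact hmon ▸ monomialFamily_mem_weightLE (by simpa using hu)

lemma weightLE_mono (h : d ≤ e) : weightLE G c s d ≤ weightLE G c s e := by
  refine Submodule.span_mono ?_
  rintro _ ⟨i, j, u, hu, rfl⟩
  exact ⟨i, j, u, polyLE_mono (by omega) hu, rfl⟩

lemma mul_mem_weightLE {A B : ι → ℝ × ℝ → ℂ} (hA : A ∈ weightLE G c s d)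
    (hB : B ∈ weightLE G c s e) : A * B ∈ weightLE G c s (d + e) := by
  have hAB := Submodule.mul_mem_mul hA hB
  rw [weightLE, weightLE, Submodule.span_mul_span] at hAB
  refine Submodule.span_mono ?_ hAB
  rintro _ ⟨_, ⟨i, j, u, hu, rfl⟩, _, ⟨i', j', u', hu', rfl⟩, rfl⟩
  refine ⟨i + i', j + j', u * u', polyLE_mono (by push_cast; linarith) (mul_mem_polyLE hu hu'), ?_⟩
  funext l z
  simp only [monomialFamily, Pi.mul_apply]
  ring

lemma monomialFamily_apply_self (u : ι → ℂ) (i j : ℕ) :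
    (fun l => monomialFamily G u i j l (G l)) = if i = 0 ∧ j = 0 then u else 0 := by
  rcases i with _ | i <;> rcases j with _ | j <;> simp [monomialFamily] <;> rfl

lemma eval_mem_polyLE {A : ι → ℝ × ℝ → ℂ} (hA : A ∈ weightLE G c s d) :
    (fun l => A l (G l)) ∈ polyLE ℂ c s d := by
  induction hA using Submodule.span_induction with
  | mem F hF =>
    obtain ⟨i, j, u, hu, rfl⟩ := hF
    rw [monomialFamily_apply_self]
    split_ifs with h
    · simpa [h] using hu
    · exact zero_mem _
  | zero => exact zero_mem _
  | add A B _ _ hA hB => exact add_mem hA hB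
  | smul a A _ hA => exact Submodule.smul_mem _ a hA

lemma differentiable_monomialFamily (u : ι → ℂ) (i j : ℕ) (l : ι) :
    Differentiable ℝ (monomialFamily G u i j l) := by
  unfold monomialFamily
  fun_prop

lemma fderiv_monomialFamily (u : ι → ℂ) (i j : ℕ) (v : ℝ × ℝ) :
    (fun l z => fderiv ℝ (monomialFamily G u i j l) z v) =
      (v.1 * i : ℂ) • monomialFamily G u (i - 1) j +
        (v.2 * j : ℂ) • monomialFamily G u i (j - 1) := by
  funext l z
  have hx : HasFDerivAt (fun z : ℝ × ℝ => ((z.1 - (G l).1 : ℝ) : ℂ))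
      (Complex.ofRealCLM.comp (ContinuousLinearMap.fst ℝ ℝ ℝ)) z :=
    Complex.ofRealCLM.hasFDerivAt.comp z (hasFDerivAt_fst.sub_const _)
  have hy : HasFDerivAt (fun z : ℝ × ℝ => ((z.2 - (G l).2 : ℝ) : ℂ))
      (Complex.ofRealCLM.comp (ContinuousLinearMap.snd ℝ ℝ ℝ)) z :=
    Complex.ofRealCLM.hasFDerivAt.comp z (hasFDerivAt_snd.sub_const _)
  have hxy : HasFDerivAt (monomialFamily G u i j l) _ z :=
    ((hx.pow i).const_mul (u l)).mul (hy.pow j)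
  simp only [hxy.fderiv, monomialFamily, add_apply, smul_apply, ContinuousLinearMap.comp_apply,
    ContinuousLinearMap.coe_fst', ContinuousLinearMap.coe_snd', Complex.ofRealCLM_apply,
    Pi.add_apply, Pi.smul_apply, smul_eq_mul, nsmul_eq_mul]
  ring

lemma differentiable_of_mem_weightLE {A : ι → ℝ × ℝ → ℂ} (hA : A ∈ weightLE G c s d) (l : ι) :
    Differentiable ℝ (A l) := by
  induction hA using Submodule.span_induction with
  | mem F hF =>
    obtain ⟨i, j, u, -, rfl⟩ := hF
    exact differentiable_monomialFamily u i j l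
  | zero => exact differentiable_const 0
  | add A B _ _ hA hB => exact hA.add hB
  | smul a A _ hA => exact hA.const_smul a

lemma fderiv_mem_weightLE {A : ι → ℝ × ℝ → ℂ} (hA : A ∈ weightLE G c s d) (v : ℝ × ℝ) :
    (fun l z => fderiv ℝ (A l) z v) ∈ weightLE G c s (d + 1) := by
  induction hA using Submodule.span_induction with
  | mem F hF =>
    obtain ⟨i, j, u, hu, rfl⟩ := hF
    rw [fderiv_monomialFamily]
    refine add_mem ?_ ?_
    · rcases i with _ | i
      · simp
      · refine Submodule.smul_mem _ _ (monomialFamily_mem_weightLE (polyLE_mono ?_ hu))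
        simp only [Nat.add_sub_cancel]
        omega
    · rcases j with _ | j
      · simp
      · refine Submodule.smul_mem _ _ (monomialFamily_mem_weightLE (polyLE_mono ?_ hu))
        simp only [Nat.add_sub_cancel]
        omega
  | zero =>
    convert zero_mem (weightLE G c s (d + 1)) using 1
    funext l z
    simp
  | add A B hA' hB' hA hB =>
    convert add_mem hA hB using 1
    funext l z
    simp [fderiv_add (differentiable_of_mem_weightLE hA' l z)
      (differentiable_of_mem_weightLE hB' l z)]
  | smul a A _ hA =>
    convert Submodule.smul_mem _ a hA using 1
    funext l z
    simp [fderiv_const_smul_field]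

end Weight

section Symbol

variable {ι : Type*} {G : ι → ℝ × ℝ} {c s : ι → ℂ} {P F : ι → ℝ × ℝ → ℂ} {d : ℤ} {u : ι → ℂ}

/-- The phases `c * (x - x_G) + s * (y - y_G)` of the exponential plane waves. -/
def linearPhase (G : ι → ℝ × ℝ) (c s : ι → ℂ) : ι → ℝ × ℝ → ℂ :=
  monomialFamily G c 1 0 + monomialFamily G s 0 1

lemma linearPhase_mem_weightLE : linearPhase G c s ∈ weightLE G c s 0 :=
  add_mem (monomialFamily_mem_weightLE (fst_mem_polyLE (by simp)))
    (monomialFamily_mem_weightLE (snd_mem_polyLE (by simp)))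

lemma differentiable_linearPhase (l : ι) : Differentiable ℝ (linearPhase G c s l) :=
  differentiable_of_mem_weightLE linearPhase_mem_weightLE l

lemma fderiv_linearPhase (l : ι) (z v : ℝ × ℝ) :
    fderiv ℝ (linearPhase G c s l) z v = ((v.1 : ℂ) • c + (v.2 : ℂ) • s) l := by
  rw [linearPhase, Pi.add_apply, fderiv_add (differentiable_monomialFamily c 1 0 l z)
    (differentiable_monomialFamily s 0 1 l z), add_apply,
    congrFun₂ (fderiv_monomialFamily c 1 0 v) l z, congrFun₂ (fderiv_monomialFamily s 0 1 v) l z]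
  simp [monomialFamily]

/-- `F = (u + B) * exp P`, where `u` has degree at most `d` in `c` and `s` and `B` has weight at
most `d - 2`: up to an error of weight two less, `u` is the symbol of the differential operator
that produced `F` from `exp P`. -/
def HasSymbol (G : ι → ℝ × ℝ) (c s : ι → ℂ) (P : ι → ℝ × ℝ → ℂ) (d : ℤ) (u : ι → ℂ)
    (F : ι → ℝ × ℝ → ℂ) : Prop :=
  u ∈ polyLE ℂ c s d ∧
    ∃ B ∈ weightLE G c s (d - 2), ∀ l, F l = fun z => (u l + B l z) * Complex.exp (P l z)

lemma hasSymbol_exp (G : ι → ℝ × ℝ) (c s : ι → ℂ) (P : ι → ℝ × ℝ → ℂ) :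
    HasSymbol G c s P 0 1 fun l z => Complex.exp (P l z) :=
  ⟨by simpa using pow_mem_polyLE (fst_mem_polyLE (R := ℂ) (c := c) (s := s) le_rfl) 0,
    0, zero_mem _, by simp⟩

lemma differentiable_of_sub_linearPhase_mem (hP : P - linearPhase G c s ∈ weightLE G c s d)
    (l : ι) : Differentiable ℝ (P l) := by
  simpa using! (differentiable_of_mem_weightLE hP l).add
    (differentiable_linearPhase (G := G) (c := c) (s := s) l)

lemma fderiv_sub_symbol_mem_weightLE (hP : P - linearPhase G c s ∈ weightLE G c s d)
    (v : ℝ × ℝ) :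
    (fun l z => fderiv ℝ (P l) z v - ((v.1 : ℂ) • c + (v.2 : ℂ) • s) l) ∈
      weightLE G c s (d + 1) := by
  convert fderiv_mem_weightLE hP v using 1
  funext l z
  rw [Pi.sub_apply, fderiv_sub (differentiable_of_sub_linearPhase_mem hP l z)
    (differentiable_linearPhase l z), sub_apply, fderiv_linearPhase]

lemma hasSymbol_fderiv (h : HasSymbol G c s P d u F)
    (hP : P - linearPhase G c s ∈ weightLE G c s (-2)) (v : ℝ × ℝ) :
    HasSymbol G c s P (d + 1) (u * ((v.1 : ℂ) • c + (v.2 : ℂ) • s))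
      fun l z => fderiv ℝ (F l) z v := by
  obtain ⟨hu, B, hB, hF⟩ := h
  set σ : ι → ℂ := (v.1 : ℂ) • c + (v.2 : ℂ) • s
  have hσ : σ ∈ polyLE ℂ c s 1 := add_mem (Submodule.smul_mem _ _ (fst_mem_polyLE le_rfl))
    (Submodule.smul_mem _ _ (snd_mem_polyLE le_rfl))
  have huB : (fun l _ => u l) + B ∈ weightLE G c s d :=
    add_mem (const_mem_weightLE hu) (weightLE_mono (by omega) hB)
  refine ⟨mul_mem_polyLE hu hσ, (fun l z => fderiv ℝ (B l) z v) + B * (fun l _ => σ l)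
    + ((fun l _ => u l) + B) * fun l z => fderiv ℝ (P l) z v - σ l, ?_, fun l => ?_⟩
  · refine add_mem (add_mem ?_ ?_) ?_
    · exact weightLE_mono (by omega) (fderiv_mem_weightLE hB v)
    · exact weightLE_mono (by omega) (mul_mem_weightLE hB (const_mem_weightLE hσ))
    · exact weightLE_mono (by omega)
        (mul_mem_weightLE huB (fderiv_sub_symbol_mem_weightLE hP v))
  · funext z
    have hderiv : HasFDerivAt (fun z => (u l + B l z) * Complex.exp (P l z)) _ z :=
      ((differentiable_of_mem_weightLE hB l z).hasFDerivAt.const_add (u l)).mul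
        (differentiable_of_sub_linearPhase_mem hP l z).hasFDerivAt.cexp
    simp only [hF l, hderiv.fderiv, add_apply, smul_apply, smul_eq_mul, Pi.add_apply,
      Pi.mul_apply]
    ring

lemma hasSymbol_pdx (h : HasSymbol G c s P d u F)
    (hP : P - linearPhase G c s ∈ weightLE G c s (-2)) :
    HasSymbol G c s P (d + 1) (u * c) fun l => pdx (F l) := by
  simpa using! hasSymbol_fderiv h hP (1, 0)

lemma hasSymbol_pdy (h : HasSymbol G c s P d u F)
    (hP : P - linearPhase G c s ∈ weightLE G c s (-2)) :
    HasSymbol G c s P (d + 1) (u * s) fun l => pdy (F l) := by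
  simpa using! hasSymbol_fderiv h hP (0, 1)

lemma hasSymbol_iterate_exp (hP : P - linearPhase G c s ∈ weightLE G c s (-2)) (k₁ k₂ : ℕ) :
    HasSymbol G c s P (k₁ + k₂) (c ^ k₁ * s ^ k₂)
      fun l => pdx^[k₁] (pdy^[k₂] fun z => Complex.exp (P l z)) := by
  induction k₁ with
  | zero =>
    induction k₂ with
    | zero => simpa using hasSymbol_exp G c s P
    | succ k₂ ih =>
      simpa [Function.iterate_succ_apply', pow_succ, add_assoc] using hasSymbol_pdy ih hP
  | succ k₁ ih =>
    simpa [Function.iterate_succ_apply', pow_succ, mul_right_comm, add_right_comm]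
      using hasSymbol_pdx ih hP

end Symbol

section Waves

variable {ι : Type*} {q : ℕ} {b : ℕ × ℕ → ℂ} {N : ℂ} {G : ι → ℝ × ℝ} {θ : ι → ℝ}
  {lam : ι → ℕ × ℕ → ℂ}

/-- First component of the wave vectors `N * (cos θ, sin θ)`. -/
def waveX (N : ℂ) (θ : ι → ℝ) : ι → ℂ := fun l => N * Real.cos (θ l)

/-- Second component of the wave vectors `N * (cos θ, sin θ)`. -/
def waveY (N : ℂ) (θ : ι → ℝ) : ι → ℂ := fun l => N * Real.sin (θ l)

lemma waveX_sq_add_waveY_sq (N : ℂ) (θ : ι → ℝ) :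
    waveX N θ ^ 2 + waveY N θ ^ 2 = algebraMap ℂ (ι → ℂ) (N ^ 2) := by
  funext l
  have h : (Real.cos (θ l) : ℂ) ^ 2 + (Real.sin (θ l) : ℂ) ^ 2 = 1 := mod_cast
    Real.cos_sq_add_sin_sq (θ l)
  simp only [waveX, waveY, Pi.add_apply, Pi.pow_apply, Pi.algebraMap_apply, Algebra.algebraMap_self,
    RingHom.id_apply]
  linear_combination N ^ 2 * h

lemma gpw_coeff_mem_polyLE
    (hlam : ∀ l, gpwSystem q b (lam l) ∧ gpwNormalized q N (θ l) (lam l)) {i j : ℕ}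
    (hij : 2 ≤ i + j) (hq : i + j ≤ q + 1) :
    (fun l => lam l (i, j)) ∈ polyLE ℂ (waveX N θ) (waveY N θ) ((i : ℤ) + j - 2) := by
  set Λ : ℕ × ℕ → ι → ℂ := fun p l => lam l p
  have hX : Λ (1, 0) = waveX N θ := funext fun l => (hlam l).2.2.1
  have hY : Λ (0, 1) = waveY N θ := funext fun l => (hlam l).2.2.2.1
  have hsys : ∀ i j : ℕ, i + j + 1 ≤ q → algebraMap ℂ (ι → ℂ) (b (i, j)) =
      (((i + 2) * (i + 1) : ℕ) : ι → ℂ) * Λ (i + 2, j)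
        + (((j + 2) * (j + 1) : ℕ) : ι → ℂ) * Λ (i, j + 2) + gpwQuad Λ i j := by
    intro i j h
    funext l
    simpa [gpwQuad, Λ, add_assoc] using (hlam l).1 i j h
  have hzero : ∀ i j : ℕ, i ≤ 1 → 1 < i + j → i + j ≤ q + 1 → Λ (i, j) = 0 :=
    fun i j hi h h' => funext fun l => (hlam l).2.2.2.2 i j hi h h'
  rw [← hX, ← hY]
  exact coeff_mem_polyLE hsys hzero (hX ▸ hY ▸ waveX_sq_add_waveY_sq N θ) i j hij hq

lemma gpwP_sub_linearPhase (hlam : ∀ l, gpwNormalized q N (θ l) (lam l)) :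
    (fun l => gpwP q (G l) (lam l)) - linearPhase G (waveX N θ) (waveY N θ) =
      ∑ i ∈ Finset.range q, ∑ j ∈ Finset.range (q - i),
        monomialFamily G (fun l => lam l (i + 2, j)) (i + 2) j := by
  funext l z
  obtain ⟨h₀, hX, hY, hzero⟩ := hlam l
  have h₁ : ∀ j ∈ Finset.range q, lam l (1, j + 1) = 0 := fun j hj =>
    hzero 1 (j + 1) le_rfl (by omega) (by rw [Finset.mem_range] at hj; omega)
  have h₂ : ∀ j ∈ Finset.range q, lam l (0, j + 2) = 0 := fun j hj =>
    hzero 0 (j + 2) zero_le_one (by omega) (by rw [Finset.mem_range] at hj; omega)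
  simp only [gpwP, Pi.sub_apply, Finset.sum_apply, linearPhase, Pi.add_apply, monomialFamily]
  rw [Finset.sum_range_succ', Finset.sum_range_succ', Nat.sub_zero,
    Finset.sum_range_succ' _ (q + 1), Finset.sum_range_succ' _ q,
    show q + 2 - (0 + 1) = q + 1 from rfl, Finset.sum_range_succ' _ q]
  have hrow₀ : ∑ j ∈ Finset.range q, lam l (0, j + 1 + 1) * ((z.1 - (G l).1 : ℝ) : ℂ) ^ 0 *
      ((z.2 - (G l).2 : ℝ) : ℂ) ^ (j + 1 + 1) = 0 :=
    Finset.sum_eq_zero fun j hj => by rw [h₂ j hj, zero_mul, zero_mul]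
  have hrow₁ : ∑ j ∈ Finset.range q, lam l (1, j + 1) * ((z.1 - (G l).1 : ℝ) : ℂ) ^ 1 *
      ((z.2 - (G l).2 : ℝ) : ℂ) ^ (j + 1) = 0 :=
    Finset.sum_eq_zero fun j hj => by rw [h₁ j hj, zero_mul, zero_mul]
  simp only [zero_add, hrow₀, hrow₁, h₀, hX, hY, waveX, waveY, Nat.add_sub_add_right, add_assoc,
    Nat.reduceAdd]
  ring

lemma gpwP_sub_linearPhase_mem_weightLE
    (hlam : ∀ l, gpwSystem q b (lam l) ∧ gpwNormalized q N (θ l) (lam l)) :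
    (fun l => gpwP q (G l) (lam l)) - linearPhase G (waveX N θ) (waveY N θ) ∈
      weightLE G (waveX N θ) (waveY N θ) (-2) := by
  rw [gpwP_sub_linearPhase fun l => (hlam l).2]
  refine sum_mem fun i hi => sum_mem fun j hj => monomialFamily_mem_weightLE ?_
  rw [Finset.mem_range] at hi hj
  exact polyLE_mono (by omega) (gpw_coeff_mem_polyLE hlam (by omega) (by omega))

lemma gpwP_apply_self (q : ℕ) (g : ℝ × ℝ) (a : ℕ × ℕ → ℂ) : gpwP q g a g = a (0, 0) := by
  simp [gpwP, Finset.sum_range_succ' _ (q + 1)]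

/-- The plane wave `exp (N * ((x - x_G) * cos θ + (y - y_G) * sin θ))`. -/
def planeWave (N : ℂ) (g : ℝ × ℝ) (t : ℝ) (z : ℝ × ℝ) : ℂ :=
  Complex.exp (N * (((z.1 - g.1 : ℝ) : ℂ) * ((Real.cos t : ℝ) : ℂ)
    + ((z.2 - g.2 : ℝ) : ℂ) * ((Real.sin t : ℝ) : ℂ)))

lemma planeWave_eq_exp_linearPhase (l : ι) : planeWave N (G l) (θ l) =
    fun z => Complex.exp (linearPhase G (waveX N θ) (waveY N θ) l z) := by
  funext z
  simp only [planeWave, linearPhase, monomialFamily, waveX, waveY, Pi.add_apply]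
  ring_nf

lemma fderiv_planeWave (l : ι) (v : ℝ × ℝ) :
    (fun z => fderiv ℝ (planeWave N (G l) (θ l)) z v) =
      (v.1 * waveX N θ l + v.2 * waveY N θ l) • planeWave N (G l) (θ l) := by
  funext z
  rw [planeWave_eq_exp_linearPhase (G := G) (θ := θ),
    (differentiable_linearPhase l z).hasFDerivAt.cexp.fderiv, smul_apply, fderiv_linearPhase]
  simp [mul_comm]

lemma iterate_pdx_pdy_planeWave (l : ι) (k₁ k₂ : ℕ) :
    pdx^[k₁] (pdy^[k₂] (planeWave N (G l) (θ l))) =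
      (waveX N θ l ^ k₁ * waveY N θ l ^ k₂) • planeWave N (G l) (θ l) := by
  have hX : pdx (planeWave N (G l) (θ l)) = waveX N θ l • planeWave N (G l) (θ l) := by
    simpa using! fderiv_planeWave (N := N) (G := G) (θ := θ) l (1, 0)
  have hY : pdy (planeWave N (G l) (θ l)) = waveY N θ l • planeWave N (G l) (θ l) := by
    simpa using! fderiv_planeWave (N := N) (G := G) (θ := θ) l (0, 1)
  have pdx_smul : ∀ (a : ℂ) (f : ℝ × ℝ → ℂ), pdx (a • f) = a • pdx f := fun a f => by
    funext z
    simp [pdx, fderiv_const_smul_field]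
  have pdy_smul : ∀ (a : ℂ) (f : ℝ × ℝ → ℂ), pdy (a • f) = a • pdy f := fun a f => by
    funext z
    simp [pdy, fderiv_const_smul_field]
  induction k₁ with
  | zero =>
    induction k₂ with
    | zero => simp
    | succ k₂ ih =>
      rw [Function.iterate_zero_apply] at ih ⊢
      rw [Function.iterate_succ_apply', ih, pdy_smul, hY, smul_smul, pow_succ, mul_assoc]
  | succ k₁ ih =>
    rw [Function.iterate_succ_apply', ih, pdx_smul, hX, smul_smul, pow_succ, mul_right_comm]

end Waves

section TaylorMatrix

variable {ι : Type*} {n q : ℕ} {b : ℕ × ℕ → ℂ} {N : ℂ} {G : ι → ℝ × ℝ} {θ : ι → ℝ}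
  {lam : ι → ℕ × ℕ → ℂ}

/-- The matrix of the normalized Taylor coefficients of order at most `n` of a family of functions;
each column may have a base point of its own. -/
def taylorMatrix (n : ℕ) (G : ι → ℝ × ℝ) (f : ι → ℝ × ℝ → ℂ) : Matrix (RowIdx n) ι ℂ :=
  Matrix.of fun r l => pdx^[(r.1.1 : ℕ)] (pdy^[(r.1.2 : ℕ)] (f l)) (G l) /
    (((r.1.1 : ℕ).factorial * (r.1.2 : ℕ).factorial : ℕ) : ℂ)

/-- The matrix `M_n` of the generalized plane waves with coefficients `lam`. -/
def gpwMatrix (n q : ℕ) (G : ι → ℝ × ℝ) (lam : ι → ℕ × ℕ → ℂ) : Matrix (RowIdx n) ι ℂ :=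
  taylorMatrix n G fun l z => Complex.exp (gpwP q (G l) (lam l) z)

/-- The matrix `M_n^C` of the classical plane waves with directions `θ`. -/
def planeWaveMatrix (n : ℕ) (N : ℂ) (G : ι → ℝ × ℝ) (θ : ι → ℝ) : Matrix (RowIdx n) ι ℂ :=
  taylorMatrix n G fun l => planeWave N (G l) (θ l)

/-- The total order `k₁ + k₂` of a row index. -/
def RowIdx.order (r : RowIdx n) : ℕ := (r.1.1 : ℕ) + (r.1.2 : ℕ)

lemma RowIdx.lt.ne {r r' : RowIdx n} (h : RowIdx.lt r r') : r ≠ r' := by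
  rintro rfl
  exact h.elim (lt_irrefl _) fun h => lt_irrefl _ h.2

lemma RowIdx.lt.order_le {r r' : RowIdx n} (h : RowIdx.lt r r') : r.order ≤ r'.order :=
  h.elim le_of_lt fun h => h.1.le

lemma planeWaveMatrix_row (r : RowIdx n) : (planeWaveMatrix n N G θ).row r =
    (((r.1.1 : ℕ).factorial * (r.1.2 : ℕ).factorial : ℕ) : ℂ)⁻¹ •
      (waveX N θ ^ (r.1.1 : ℕ) * waveY N θ ^ (r.1.2 : ℕ)) := by
  funext l
  simp [planeWaveMatrix, taylorMatrix, iterate_pdx_pdy_planeWave, planeWave, div_eq_inv_mul]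

lemma polyLE_le_span_planeWaveMatrix_row {d : ℤ} (hd : d ≤ n) :
    polyLE ℂ (waveX N θ) (waveY N θ) d ≤
      Submodule.span ℂ ((planeWaveMatrix n N G θ).row '' {r | (r.order : ℤ) ≤ d}) := by
  refine Submodule.span_le.mpr ?_
  rintro _ ⟨k₁, k₂, hk, rfl⟩
  let r : RowIdx n := ⟨(⟨k₁, by omega⟩, ⟨k₂, by omega⟩), show k₁ + k₂ ≤ n by omega⟩
  have hr_order : (r.order : ℤ) ≤ d := hk
  have hr : waveX N θ ^ k₁ * waveY N θ ^ k₂ =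
      ((k₁.factorial * k₂.factorial : ℕ) : ℂ) • (planeWaveMatrix n N G θ).row r := by
    rw [planeWaveMatrix_row, smul_inv_smul₀ (Nat.cast_ne_zero.mpr (by positivity))]
  rw [SetLike.mem_coe, hr]
  exact Submodule.smul_mem _ _ (Submodule.subset_span ⟨r, hr_order, rfl⟩)

lemma gpwMatrix_row_sub_planeWaveMatrix_row_mem
    (hlam : ∀ l, gpwSystem q b (lam l) ∧ gpwNormalized q N (θ l) (lam l)) (r : RowIdx n) :
    (gpwMatrix n q G lam).row r - (planeWaveMatrix n N G θ).row r ∈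
      polyLE ℂ (waveX N θ) (waveY N θ) ((r.order : ℤ) - 2) := by
  obtain ⟨-, B, hB, hF⟩ :=
    hasSymbol_iterate_exp (gpwP_sub_linearPhase_mem_weightLE (G := G) hlam) r.1.1 r.1.2
  have hord : (r.order : ℤ) = (r.1.1 : ℕ) + (r.1.2 : ℕ) := Nat.cast_add _ _
  rw [hord]
  convert Submodule.smul_mem _ (((r.1.1 : ℕ).factorial * (r.1.2 : ℕ).factorial : ℕ) : ℂ)⁻¹
    (eval_mem_polyLE hB) using 1
  rw [planeWaveMatrix_row]
  funext l
  have hexp : Complex.exp (gpwP q (G l) (lam l) (G l)) = 1 := by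
    rw [gpwP_apply_self, (hlam l).2.1, Complex.exp_zero]
  simp only [gpwMatrix, taylorMatrix, hF, hexp, Matrix.row_apply, Matrix.of_apply, Pi.sub_apply,
    Pi.smul_apply, smul_eq_mul]
  ring

lemma exists_gpwMatrix_eq_mul_planeWaveMatrix (n : ℕ) (G : ι → ℝ × ℝ)
    (hlam : ∀ l, gpwSystem q b (lam l) ∧ gpwNormalized q N (θ l) (lam l)) :
    ∃ L : Matrix (RowIdx n) (RowIdx n) ℂ,
      (∀ r r', r.order ≤ r'.order → L r r' = (1 : Matrix (RowIdx n) (RowIdx n) ℂ) r r') ∧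
        gpwMatrix n q G lam = L * planeWaveMatrix n N G θ := by
  refine exists_blockUnitriangular_mul_eq fun r => ?_
  have hr : (r.order : ℤ) ≤ n := Nat.cast_le.mpr r.2
  have hlower : {r' : RowIdx n | (r'.order : ℤ) ≤ (r.order : ℤ) - 2} ⊆
      {r' | r'.order < r.order} := fun r' (h : (r'.order : ℤ) ≤ (r.order : ℤ) - 2) =>
    show r'.order < r.order by omega
  exact Submodule.span_mono (Set.image_mono hlower)
    (polyLE_le_span_planeWaveMatrix_row (by omega)
      (gpwMatrix_row_sub_planeWaveMatrix_row_mem hlam r))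

lemma exp_mul_I_mem_polyLE (hN : N ≠ 0) :
    (fun l => Complex.exp (θ l * Complex.I)) ∈ polyLE ℂ (waveX N θ) (waveY N θ) 1 := by
  have hexp : (fun l => Complex.exp (θ l * Complex.I)) =
      N⁻¹ • (waveX N θ + Complex.I • waveY N θ) := by
    funext l
    simp only [Complex.exp_mul_I, waveX, waveY, Complex.ofReal_cos, Complex.ofReal_sin,
      Pi.smul_apply, Pi.add_apply, smul_eq_mul]
    field_simp
  rw [hexp]
  exact Submodule.smul_mem _ _
    (add_mem (fst_mem_polyLE le_rfl) (Submodule.smul_mem _ _ (snd_mem_polyLE le_rfl)))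

lemma exp_neg_mul_I_mem_polyLE (hN : N ≠ 0) :
    (fun l => Complex.exp (-θ l * Complex.I)) ∈ polyLE ℂ (waveX N θ) (waveY N θ) 1 := by
  have hexp : (fun l => Complex.exp (-θ l * Complex.I)) =
      N⁻¹ • (waveX N θ - Complex.I • waveY N θ) := by
    funext l
    simp only [Complex.exp_mul_I, Complex.cos_neg, Complex.sin_neg, waveX, waveY,
      Complex.ofReal_cos, Complex.ofReal_sin, Pi.smul_apply, Pi.sub_apply, smul_eq_mul]
    field_simp
    ring
  rw [hexp]
  exact Submodule.smul_mem _ _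
    (sub_mem (fst_mem_polyLE le_rfl) (Submodule.smul_mem _ _ (snd_mem_polyLE le_rfl)))

lemma inv_pow_mul_pow_mem_polyLE (hN : N ≠ 0) {p : ℕ} (hp : p ≤ 2 * n) :
    (fun l => (Complex.exp (θ l * Complex.I) ^ n)⁻¹ * Complex.exp (θ l * Complex.I) ^ p) ∈
      polyLE ℂ (waveX N θ) (waveY N θ) n := by
  rcases le_total n p with h | h
  · have hdeg : ((p - n : ℕ) : ℤ) ≤ n := by omega
    convert polyLE_mono hdeg (pow_mem_polyLE (exp_mul_I_mem_polyLE (θ := θ) hN) _) using 1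
    funext l
    rw [Pi.pow_apply, pow_sub₀ _ (Complex.exp_ne_zero _) h, mul_comm]
  · have hdeg : ((n - p : ℕ) : ℤ) ≤ n := by omega
    convert polyLE_mono hdeg (pow_mem_polyLE (exp_neg_mul_I_mem_polyLE (θ := θ) hN) _) using 1
    funext l
    rw [Pi.pow_apply, neg_mul, Complex.exp_neg, inv_pow,
      pow_sub₀ _ (Complex.exp_ne_zero _) h, mul_inv, inv_inv]

variable [Fintype ι]

lemma dotProduct_eq_zero_of_mem_polyLE {u v : ι → ℂ}
    (hu : u ∈ polyLE ℂ (waveX N θ) (waveY N θ) n)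
    (hv : (planeWaveMatrix n N G θ).mulVec v = 0) : u ⬝ᵥ v = 0 := by
  replace hu := polyLE_le_span_planeWaveMatrix_row (G := G) le_rfl hu
  induction hu using Submodule.span_induction with
  | mem u h =>
    obtain ⟨r, -, rfl⟩ := h
    exact congrFun hv r
  | zero => exact zero_dotProduct v
  | add u u' _ _ h h' => rw [add_dotProduct, h, h', add_zero]
  | smul a u _ h => rw [smul_dotProduct, h, smul_zero]

lemma rank_planeWaveMatrix (G : ι → ℝ × ℝ) (hN : N ≠ 0)
    (hθ : Function.Injective fun l => Complex.exp (θ l * Complex.I))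
    (hcard : Fintype.card ι ≤ 2 * n + 1) :
    (planeWaveMatrix n N G θ).rank = Fintype.card ι := by
  suffices hker : ∀ v, (planeWaveMatrix n N G θ).mulVec v = 0 → v = 0 by
    rw [Matrix.rank, LinearMap.finrank_range_of_inj
      ((injective_iff_map_eq_zero (planeWaveMatrix n N G θ).mulVecLin).mpr hker),
      Module.finrank_fintype_fun_eq_card]
  intro v hv
  set ζ : ι → ℂ := fun l => Complex.exp (θ l * Complex.I)
  have modes : ∀ p < Fintype.card ι, ∑ l, v l * (ζ l ^ n)⁻¹ * ζ l ^ p = 0 := by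
    intro p hp
    have hmode : (fun l => (ζ l ^ n)⁻¹ * ζ l ^ p) ∈ polyLE ℂ (waveX N θ) (waveY N θ) n :=
      inv_pow_mul_pow_mem_polyLE hN (by omega)
    rw [← dotProduct_eq_zero_of_mem_polyLE hmode hv, dotProduct]
    exact Finset.sum_congr rfl fun l _ => by ring
  have hprod := eq_zero_of_forall_sum_mul_pow_eq_zero hθ modes
  funext l
  exact (mul_eq_zero.mp (congrFun hprod l)).resolve_right
    (inv_ne_zero (pow_ne_zero n (Complex.exp_ne_zero _)))

end TaylorMatrix

lemma injective_exp_equispaced (m : ℕ) :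
    Function.Injective fun l : Fin m =>
      Complex.exp ((2 * Real.pi * (l : ℕ) / m : ℝ) * Complex.I) := by
  intro l l' hll'
  have hm : m ≠ 0 := l.pos.ne'
  have hroot : ∀ l : Fin m, Complex.exp ((2 * Real.pi * (l : ℕ) / m : ℝ) * Complex.I) =
      Complex.exp (2 * Real.pi * Complex.I / m) ^ (l : ℕ) := by
    intro l
    rw [← Complex.exp_nat_mul]
    push_cast
    ring_nf
  simp only [hroot] at hll'
  exact Fin.ext ((Complex.isPrimitiveRoot_exp m hm).pow_inj l.2 l'.2 hll')

theorem Mn_eq_Ln_mul_MnC_general (n q : ℕ) (b : ℕ × ℕ → ℂ) (N : ℂ) :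
    ∃ L : Matrix (RowIdx n) (RowIdx n) ℂ,
      (∀ r, L r r = 1) ∧ (∀ r r', RowIdx.lt r r' → L r r' = 0) ∧
      ∀ {ι : Type*} [Fintype ι] (G : ι → ℝ × ℝ) (θ : ι → ℝ) (lam : ι → ℕ × ℕ → ℂ),
        (∀ l, gpwSystem q b (lam l) ∧ gpwNormalized q N (θ l) (lam l)) →
        gpwMatrix n q G lam = L * planeWaveMatrix n N G θ ∧
          (N ≠ 0 → Function.Injective (fun l => Complex.exp (θ l * Complex.I)) →
            Fintype.card ι ≤ 2 * n + 1 →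
            (gpwMatrix n q G lam).rank = Fintype.card ι ∧
              (planeWaveMatrix n N G θ).rank = Fintype.card ι) := by
  -- Factoring the matrix whose columns are all solutions at once makes `L` independent of the
  -- directions, of the base points and of the number of waves.
  let Solution := {x : (ℝ × ℝ) × ℝ × (ℕ × ℕ → ℂ) //
    gpwSystem q b x.2.2 ∧ gpwNormalized q N x.2.1 x.2.2}
  obtain ⟨L, hL, hfactor⟩ := exists_gpwMatrix_eq_mul_planeWaveMatrix n
    (fun x : Solution => x.1.1) (θ := fun x => x.1.2.1) (lam := fun x => x.1.2.2) fun x => x.2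
  refine ⟨L, fun r => ?_, fun r r' h => ?_, fun {ι} _ G θ lam hlam => ?_⟩
  · rw [hL r r le_rfl, Matrix.one_apply_eq]
  · rw [hL r r' h.order_le, Matrix.one_apply_ne h.ne]
  have hM : gpwMatrix n q G lam = L * planeWaveMatrix n N G θ := Matrix.ext fun r l =>
    congrFun₂ hfactor r ⟨(G l, θ l, lam l), hlam l⟩
  refine ⟨hM, fun hN hθ hcard => ?_⟩
  have hrank := rank_planeWaveMatrix G hN hθ hcard
  have hdet : IsUnit L.det := det_eq_one_of_blockUnitriangular hL ▸ isUnit_one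
  exact ⟨by rw [hM, Matrix.rank_mul_eq_right_of_isUnit_det _ _ hdet, hrank], hrank⟩

/-- There is a lower-triangular matrix `L_n` with unit diagonal such that `M_n = L_n ⬝ M_n^C`,
where `M_n` (resp. `M_n^C`) is the matrix of normalized Taylor coefficients at `G` of the
generalized plane waves `φ_l` (resp. of the classical plane waves `e_l`) with equi-spaced
directions `θ_l = 2π(l-1)/(2n+1)`; consequently both matrices have full rank `2n + 1`. -/
theorem Mn_eq_Ln_mul_MnC (n q : ℕ) (hn : 1 ≤ n) (hq : n + 1 ≤ q) (b : ℕ × ℕ → ℂ)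
    (N : ℂ) (hN : N ≠ 0) (G : ℝ × ℝ)
    (lam : Fin (2 * n + 1) → ℕ × ℕ → ℂ)
    (hlam : ∀ l : Fin (2 * n + 1), gpwSystem q b (lam l) ∧
      gpwNormalized q N (2 * Real.pi * (l : ℕ) / (2 * n + 1)) (lam l))
    (Mn MnC : Matrix (RowIdx n) (Fin (2 * n + 1)) ℂ)
    (hMn : ∀ (r : RowIdx n) (l : Fin (2 * n + 1)),
      Mn r l =
        pdx^[(r.1.1 : ℕ)] (pdy^[(r.1.2 : ℕ)]
            (fun z => Complex.exp (gpwP q G (lam l) z))) G /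
          ((((r.1.1 : ℕ).factorial * (r.1.2 : ℕ).factorial : ℕ)) : ℂ))
    (hMnC : ∀ (r : RowIdx n) (l : Fin (2 * n + 1)),
      MnC r l =
        pdx^[(r.1.1 : ℕ)] (pdy^[(r.1.2 : ℕ)]
            (fun z => Complex.exp (N *
              (((z.1 - G.1 : ℝ) : ℂ) *
                  ((Real.cos (2 * Real.pi * (l : ℕ) / (2 * n + 1)) : ℝ) : ℂ)
                + ((z.2 - G.2 : ℝ) : ℂ) *
                  ((Real.sin (2 * Real.pi * (l : ℕ) / (2 * n + 1)) : ℝ) : ℂ))))) G /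
          ((((r.1.1 : ℕ).factorial * (r.1.2 : ℕ).factorial : ℕ)) : ℂ)) :
    ∃ L : Matrix (RowIdx n) (RowIdx n) ℂ,
      (∀ r : RowIdx n, L r r = 1) ∧
      (∀ r r' : RowIdx n, RowIdx.lt r r' → L r r' = 0) ∧
      Mn = L * MnC ∧ Mn.rank = 2 * n + 1 ∧ MnC.rank = 2 * n + 1 := by
  obtain ⟨L, hdiag, hlower, hL⟩ := Mn_eq_Ln_mul_MnC_general n q b N
  obtain ⟨hmul, hrank⟩ := hL (fun _ => G) _ lam hlam
  have hθ : Function.Injective fun l : Fin (2 * n + 1) =>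
      Complex.exp ((2 * Real.pi * (l : ℕ) / (2 * n + 1) : ℝ) * Complex.I) := by
    simpa using injective_exp_equispaced (2 * n + 1)
  obtain rfl : Mn = gpwMatrix n q (fun _ => G) lam := Matrix.ext hMn
  obtain rfl : MnC = planeWaveMatrix n N (fun _ => G) _ := Matrix.ext hMnC
  obtain ⟨hMn_rank, hMnC_rank⟩ := hrank hN hθ (Fintype.card_fin _).le
  rw [Fintype.card_fin] at hMn_rank hMnC_rank
  exact ⟨L, hdiag, hlower, hmul, hMn_rank, hMnC_rank⟩
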